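/- arXiv:1911.01851 — 4 statements merged into one kernel-verified Lean document; each statement's English description precedes it below -/
import Mathlib

section
/- Let w be a nonempty word over a totally ordered alphabet Σ that is not an inverse Lyndon word, let (p, p̄) ∈ Pref_bre(w), and write CFL_in(w) = (ℓ1^{n1}, …, ℓh^{nh}) with h > 0, n1, …, nh ≥ 1 and ℓ1, …, ℓh pairwise distinct anti-Lyndon words. Let q with 1 ≤ q ≤ h be such that ℓ_{j+1} is a prefix of ℓ_j for every j with 1 ≤ j < q and, if q < h, ℓ_{q+1} is not a prefix of ℓ_q (so ℓ1^{n1}, …, ℓq^{nq} is the first maximal nonincreasing chain for the prefix order in CFL_in(w)). Then: (1) p = ℓ1^{n1} ⋯ ℓ_g^{n_g} for some g with 1 ≤ g ≤ q; (2) writing ℓ_g = u_g a_g v'_g with a_g a letter, one has p̄ = u_g b for some letter b with a_g < b. -/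
/-!
Write `<'` for the inverse letter order, so that anti-Lyndon words are the Lyndon words for `<'`,
and let `x ≪' y` (`StrongLt x y`) mean that, at the first position where `x` and `y` differ, `x`
has the `<'`-smaller letter. The only property of an inverse Lyndon word `z` that is needed is
that no suffix `s` of `z` satisfies `s ≪' z` (`IsInvLyndon.not_strongLt`).

Minimality of the bounded right extension gives `p = r a s` and `p̄ = r b` with `a < b`
(`IsBRE.exists_eq`), and both `p r` and `r b` are inverse Lyndon words. The key fact is
`not_prefix_of_suffix`: no nonempty suffix `y` of `p` is a prefix of `r`. Indeed, if `r = y r'`,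
then `r b` being an inverse Lyndon word forces `r ≪' r' a`, whence `y r ≪' y r' a s = p`, although
`y r` is a suffix of the inverse Lyndon word `p r`. Consequently `r a` is a prefix of every
nonempty `y` that is both a prefix and a suffix of `p`.

Since the factors of `CFL_in(w)` are nonincreasing, every piece of a factor lying inside `p` and
starting where the factor starts is a prefix of `p` (`prefix_of_factor`). If the end of `p` cut a
factor `f = y z` into two nonempty pieces, then `r a` would be a prefix of `y`, while the words `z`
and `r b` would be comparable for the prefix order; either `z` is a prefix of `f` or `z ≪' f`,
against `f` being anti-Lyndon. So `p` is a product of factors. The last of these starts with `r a`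
whereas the rest of `w` starts with `r b`, so the factor after `p` is different and `p` ends at the
end of a block `ℓ_g^{n_g}`. Finally all factors inside `p` are prefixes of `p`, hence form a
nonincreasing chain for the prefix order, so `g ≤ q`.
-/

open List

section Defs

variable {α : Type*} [LinearOrder α]

/-- The lexicographic order `x ≺ y` on words over the ordered alphabet `α`. -/
def lexLt (x y : List α) : Prop := List.Lex (· < ·) x y

/-- The inverse `<_in` of the letter order. -/
def invLt (a b : α) : Prop := b < a

/-- `x ≪ y` : `x ≺ y` and `x` is not a (proper) prefix of `y`. -/
def lexLtLt (x y : List α) : Prop := lexLt x y ∧ ¬ x <+: y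

/-- `w` is a Lyndon word with respect to the letter order `r`:
nonempty, primitive, and `≺ᵣ`-smaller than each of its proper nonempty suffixes. -/
def IsLyndonWith (r : α → α → Prop) (w : List α) : Prop :=
  w ≠ [] ∧ (∀ (u : List α) (n : ℕ), w = (List.replicate n u).flatten → n = 1) ∧
  ∀ s : List α, s ≠ [] → s ≠ w → s <:+ w → List.Lex r w s

/-- `L` is the Lyndon factorization of `w` with respect to the letter order `r`:
a nonempty sequence of Lyndon words, nonincreasing for `≺ᵣ`, whose product is `w`. -/
def IsCFLWith (r : α → α → Prop) (w : List α) (L : List (List α)) : Prop :=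
  L ≠ [] ∧ L.flatten = w ∧ (∀ l ∈ L, IsLyndonWith r l) ∧
  List.Chain' (fun x y => ¬ List.Lex r x y) L

/-- an anti-prenecklace: a prefix of a power of an anti-Lyndon word. -/
def IsAntiPrenecklace (z : List α) : Prop :=
  ∃ (l : List α) (k : ℕ), IsLyndonWith invLt l ∧ z <+: (List.replicate k l).flatten

/-- an inverse Lyndon word: each proper nonempty suffix is `≺`-smaller than `w`. -/
def IsInvLyndon (w : List α) : Prop :=
  w ≠ [] ∧ ∀ s : List α, s ≠ [] → s ≠ w → s <:+ w → lexLt s w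

/-- `z` is a border of `w`: a proper prefix and a suffix of `w`. -/
def IsBorder (z w : List α) : Prop := z <+: w ∧ z ≠ w ∧ z <:+ w

/-- `(p, pbar) ∈ Pref_bre(w)`: `p` is an inverse Lyndon word which is a nonempty proper
prefix of `w = p v` and `pbar` is its bounded right extension. -/
def IsBRE (p pbar w : List α) : Prop :=
  IsInvLyndon p ∧ p ≠ [] ∧ p ≠ w ∧
  (∃ v : List α, w = p ++ v ∧ pbar <+: v) ∧ pbar ≠ [] ∧
  IsInvLyndon pbar ∧
  (∀ z' : List α, z' ≠ [] → z' ≠ pbar → z' <+: pbar → IsInvLyndon (p ++ z')) ∧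
  ¬ IsInvLyndon (p ++ pbar) ∧
  lexLt p pbar ∧ ¬ p <+: pbar

/-- The canonical inverse Lyndon factorization `ICFL(w) = M`. -/
inductive IsICFL : List α → List (List α) → Prop
  | base (w : List α) : IsInvLyndon w → IsICFL w [w]
  | ext (w p pbar v m1 : List α) (ms : List (List α)) :
      ¬ IsInvLyndon w → IsBRE p pbar w → w = p ++ v →
      IsICFL v (m1 :: ms) → pbar <+: m1 → IsICFL w (p :: m1 :: ms)
  | grp (w p pbar v r : List α) (a b : α) (s m1 : List α) (ms : List (List α)) :
      ¬ IsInvLyndon w → IsBRE p pbar w → w = p ++ v →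
      p = r ++ a :: s → pbar = r ++ [b] → a < b →
      IsICFL v (m1 :: ms) → m1 <+: r → IsICFL w ((p ++ m1) :: ms)

/-- the longest common prefix of two words. -/
def lcp : List α → List α → List α
  | a :: x, b :: y => if a = b then a :: lcp x y else []
  | _, _ => []

end Defs

/-! ### Comparison of words -/

/-- `x ≪' y`: at the first position where the words `x` and `y` differ (which exists in both), `x`
carries the letter that is smaller for the inverse order, i.e. the larger letter. -/
def StrongLt {α : Type*} [LinearOrder α] : List α → List α → Prop
  | a :: x, b :: y => b < a ∨ a = b ∧ StrongLt x y
  | _, _ => False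

section Aux

variable {α : Type*} [LinearOrder α]

@[simp] lemma strongLt_cons (a b : α) (x y : List α) :
    StrongLt (a :: x) (b :: y) ↔ b < a ∨ a = b ∧ StrongLt x y := Iff.rfl

@[simp] lemma strongLt_nil_left (y : List α) : ¬ StrongLt [] y := by
  simp [StrongLt]

@[simp] lemma strongLt_nil_right (x : List α) : ¬ StrongLt x [] := by
  cases x <;> simp [StrongLt]

lemma StrongLt.append {x y : List α} (h : StrongLt x y) (s t : List α) :
    StrongLt (x ++ s) (y ++ t) := by
  induction x generalizing y with
  | nil => simp at h
  | cons a x ih =>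
    cases y with
    | nil => simp at h
    | cons b y =>
      simp only [List.cons_append, strongLt_cons] at h ⊢
      exact h.imp id (fun h => ⟨h.1, ih h.2⟩)

lemma strongLt_append_left (t : List α) {x y : List α} :
    StrongLt (t ++ x) (t ++ y) ↔ StrongLt x y := by
  induction t with
  | nil => rfl
  | cons a t ih => simp [ih]

lemma strongLt_of_lt (r s t : List α) {a b : α} (h : a < b) :
    StrongLt (r ++ b :: s) (r ++ a :: t) :=
  (strongLt_append_left r).2 (Or.inl h)

lemma strongLt_irrefl (x : List α) : ¬ StrongLt x x := by
  induction x with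
  | nil => simp
  | cons a x ih => simp [ih]

lemma prefix_or_strongLt (x y : List α) :
    x <+: y ∨ y <+: x ∨ StrongLt x y ∨ StrongLt y x := by
  induction x generalizing y with
  | nil => simp
  | cons a x ih =>
    cases y with
    | nil => simp
    | cons b y =>
      rcases lt_trichotomy a b with h | h | h
      · simp [h]
      · subst h
        simpa using ih y
      · simp [h]

lemma not_lexLt_of_strongLt {x y : List α} (h : StrongLt x y) : ¬ lexLt x y := by
  intro hl
  unfold lexLt at hl
  induction hl with
  | nil => simp at h
  | cons _ ih => simp at h; exact ih h
  | rel hab =>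
    simp only [strongLt_cons] at h
    rcases h with h | h
    · exact lt_asymm h hab
    · exact hab.ne h.1

lemma not_lex_of_strongLt {x y : List α} (h : StrongLt x y) : ¬ List.Lex invLt y x := by
  intro hl
  induction hl with
  | nil => simp at h
  | cons _ ih => simp at h; exact ih h
  | rel hab =>
    simp only [strongLt_cons] at h
    rcases h with h | h
    · exact lt_asymm h hab
    · exact (show _ < _ from hab).ne h.1

lemma not_lex_of_prefix {x y : List α} (h : x <+: y) : ¬ List.Lex invLt y x := by
  intro hl
  induction hl with
  | nil => simp at h
  | cons _ ih => simp at h; exact ih h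
  | rel hab =>
    simp only [List.cons_prefix_cons] at h
    exact (show _ < _ from hab).ne h.1

lemma lex_of_prefix_of_ne {x y : List α} (h : x <+: y) (hne : x ≠ y) : List.Lex invLt x y := by
  induction x generalizing y with
  | nil =>
    cases y with
    | nil => simp at hne
    | cons b y => exact List.Lex.nil
  | cons a x ih =>
    cases y with
    | nil => simp at h
    | cons b y =>
      simp only [List.cons_prefix_cons] at h
      obtain ⟨rfl, h⟩ := h
      exact List.Lex.cons (ih h (by simpa using hne))

lemma lex_of_prefix_of_strongLt {l p f : List α} (hl : l <+: p) (h : StrongLt p f) :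
    List.Lex invLt l f := by
  induction l generalizing p f with
  | nil =>
    cases f with
    | nil => simp at h
    | cons b y => exact List.Lex.nil
  | cons a l ih =>
    cases p with
    | nil => simp at hl
    | cons c p =>
      cases f with
      | nil => simp at h
      | cons b y =>
        simp only [List.cons_prefix_cons] at hl
        obtain ⟨rfl, hl⟩ := hl
        rcases h with h | ⟨rfl, h⟩
        · exact List.Lex.rel h
        · exact List.Lex.cons (ih hl h)

/-- Transitivity of the weak lexicographic order attached to `<_in`, in the negated form used by
`IsCFLWith`. -/
lemma not_lex_trans {x y z : List α} (h1 : ¬ List.Lex invLt x y) (h2 : ¬ List.Lex invLt y z) :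
    ¬ List.Lex invLt x z := by
  have key : ∀ u v t : List αᵒᵈ, ¬ u < v → ¬ v < t → ¬ u < t := fun u v t a b =>
    not_lt.2 (le_trans (not_lt.1 b) (not_lt.1 a))
  exact key x y z h1 h2

/-! ### Inverse Lyndon words and bounded right extensions -/

lemma IsInvLyndon.not_strongLt {w s : List α} (hw : IsInvLyndon w) (hs : s <:+ w) :
    ¬ StrongLt s w := by
  intro h
  by_cases h1 : s = []
  · simp [h1] at h
  by_cases h2 : s = w
  · exact strongLt_irrefl w (h2 ▸ h)
  exact not_lexLt_of_strongLt h (hw.2 s h1 h2 hs)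

/-- If `r'` is shorter than `r` and `r' b ≪' r b` fails, then passing from `b` to the
`<_in`-larger letter `a` makes the comparison strict: `r ≪' r' a`. -/
lemma strongLt_concat {a b : α} (hab : a < b) (r' r : List α) (hlen : r'.length < r.length)
    (h : ¬ StrongLt (r' ++ [b]) (r ++ [b])) : StrongLt r (r' ++ [a]) := by
  induction r' generalizing r with
  | nil =>
    cases r with
    | nil => simp at hlen
    | cons c x =>
      simp at h ⊢
      exact hab.trans_le h
  | cons e r' ih =>
    cases r with
    | nil => simp at hlen
    | cons c x =>
      simp at hlen
      simp only [List.cons_append, strongLt_cons, not_or, not_lt, not_and] at h ⊢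
      rcases h.1.lt_or_eq with h1 | h1
      · exact Or.inl h1
      · exact Or.inr ⟨h1.symm, ih x hlen (h.2 h1)⟩

/-- No nonempty suffix of `p = r a s` is a prefix of `r`. -/
lemma not_prefix_of_suffix {r s y : List α} {a b : α} (hab : a < b)
    (hpr : IsInvLyndon ((r ++ a :: s) ++ r)) (hrb : IsInvLyndon (r ++ [b]))
    (hy : y ≠ []) (hys : y <:+ r ++ a :: s) : ¬ y <+: r := by
  rintro ⟨r', rfl⟩
  have h1 : ¬ StrongLt (r' ++ [b]) ((y ++ r') ++ [b]) :=
    hrb.not_strongLt ⟨y, by simp⟩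
  have h2 := strongLt_concat hab r' (y ++ r')
    (by simpa using List.length_pos_iff.2 hy) h1
  obtain ⟨t, ht⟩ := hys
  have h3 : ¬ StrongLt (y ++ (y ++ r')) (((y ++ r') ++ a :: s) ++ (y ++ r')) :=
    hpr.not_strongLt ⟨t, by rw [← ht]; simp⟩
  apply h3
  have h4 := (strongLt_append_left y).2 (h2.append [] (s ++ (y ++ r')))
  simpa using h4

/-- A prefix of `p = r a s` which is not a prefix of `r` starts with `r a`. -/
lemma prefix_of_not_prefix {β : Type*} {r s y : List β} {a : β} (h1 : y <+: r ++ a :: s)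
    (h2 : ¬ y <+: r) : r ++ [a] <+: y := by
  have h3 : r ++ [a] <+: r ++ a :: s := ⟨s, by simp⟩
  rcases List.prefix_or_prefix_of_prefix h1 h3 with h | h
  · rcases List.prefix_concat_iff.1 h with h | h
    · rw [h]
    · exact absurd h h2
  · exact h

/-- If `y` is a prefix of a factor `f` which is at most the prefix `l` of `p` for the
lexicographic order attached to `<_in`, and `y` starts a suffix of the inverse Lyndon word `p`,
then `y` is a prefix of `p`. -/
lemma prefix_of_factor {p l f y t : List α} (hp : IsInvLyndon p) (hl : l <+: p)
    (hlf : ¬ List.Lex invLt l f) (hyf : y <+: f) (hyt : y ++ t <:+ p) : y <+: p := by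
  rcases prefix_or_strongLt y p with h | h | h | h
  · exact h
  · have h1 := hyt.length_le
    simp at h1
    rw [h.eq_of_length_le (by omega)]
  · exact absurd (by simpa using h.append t []) (hp.not_strongLt hyt)
  · obtain ⟨z, rfl⟩ := hyf
    exact absurd (lex_of_prefix_of_strongLt hl (by simpa using h.append [] z)) hlf

/-- The shape of a bounded right extension. -/
lemma IsBRE.exists_eq {p pbar w : List α} (h : IsBRE p pbar w) :
    ∃ (r s : List α) (a b : α), a < b ∧ p = r ++ a :: s ∧ pbar = r ++ [b] ∧
      IsInvLyndon (p ++ r) := by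
  obtain ⟨hp, -, -, -, -, -, hz, -, hlt, hnp⟩ := h
  have key : ∃ (r s t : List α) (a b : α), a < b ∧ p = r ++ a :: s ∧ pbar = r ++ b :: t := by
    clear hz hp
    unfold lexLt at hlt
    induction hlt with
    | nil => simp at hnp
    | @cons c x y _ ih =>
      obtain ⟨r, s, t, a, b, hab, rfl, rfl⟩ := ih (by simpa using hnp)
      exact ⟨c :: r, s, t, a, b, hab, rfl, rfl⟩
    | @rel a x b y hab => exact ⟨[], x, y, a, b, hab, rfl, rfl⟩
  obtain ⟨r, s, t, a, b, hab, hpe, hpb⟩ := key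
  have ht : t = [] := by
    by_contra ht
    have h1 : IsInvLyndon (p ++ (r ++ [b])) := by
      apply hz _ (by simp)
      · rw [hpb]
        simpa using ht
      · exact ⟨t, by simp [hpb]⟩
    apply h1.not_strongLt (List.suffix_append p (r ++ [b]))
    rw [hpe]
    simpa using strongLt_of_lt r [] (s ++ (r ++ [b])) hab
  subst ht
  refine ⟨r, s, a, b, hab, hpe, hpb, ?_⟩
  by_cases hr : r = []
  · simpa [hr] using hp
  · exact hz r hr (by simp [hpb]) ⟨[b], hpb.symm⟩

/-! ### Cutting the factorization at `p` -/

/-- A cut of a concatenation of nonempty blocks `ℓ_j^{n_j}` at a place where two consecutive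
factors differ is a cut between two blocks. -/
lemma exists_block_cut {β : Type*} (h : ℕ) (ℓ : ℕ → β) (n : ℕ → ℕ)
    (hn : ∀ j, 1 ≤ j → j ≤ h → 1 ≤ n j) (A B : List β) (m f : β) (hmf : m ≠ f)
    (hL : ((List.range h).map (fun j => List.replicate (n (j+1)) (ℓ (j+1)))).flatten =
      (A ++ [m]) ++ f :: B) :
    ∃ g, 1 ≤ g ∧ g ≤ h ∧ m = ℓ g ∧
      A ++ [m] = ((List.range g).map (fun j => List.replicate (n (j+1)) (ℓ (j+1)))).flatten := by
  have key : ∃ as bs, (List.range h).map (fun j => List.replicate (n (j+1)) (ℓ (j+1))) = as ++ bs ∧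
      A ++ [m] = as.flatten := by
    rcases List.flatten_eq_append_iff.1 hL with ⟨as, bs, h1, h2, -⟩ | ⟨as, bs, c, cs, ds, h1, h2, h3⟩
    · exact ⟨as, bs, h1, h2⟩
    · rcases List.eq_nil_or_concat bs with rfl | ⟨bs', x, rfl⟩
      · exact ⟨as, _, h1, by simpa using h2⟩
      · -- `m` and `f` lie in one block, hence are equal
        exfalso
        rw [List.concat_eq_append, ← List.append_assoc] at h2
        obtain ⟨-, h4⟩ := List.append_inj' h2 rfl
        have h5 : m = x := by simpa using h4
        have h6 : f = c := by simp at h3; exact h3.1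
        have h7 : (bs'.concat x ++ c :: cs) ∈
            (List.range h).map (fun j => List.replicate (n (j+1)) (ℓ (j+1))) := by
          rw [h1]; simp
        obtain ⟨j, -, hj⟩ := List.mem_map.1 h7
        have hx : x = ℓ (j+1) := List.eq_of_mem_replicate (n := n (j+1)) (by rw [hj]; simp)
        have hc : c = ℓ (j+1) := List.eq_of_mem_replicate (n := n (j+1)) (by rw [hj]; simp)
        exact hmf (by rw [h5, h6, hx, hc])
  obtain ⟨as, bs, h1, h2⟩ := key
  have hlen : as.length ≤ h := by
    have := congrArg List.length h1
    simp at this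
    omega
  have has : as = (List.range as.length).map (fun j => List.replicate (n (j+1)) (ℓ (j+1))) := by
    have := congrArg (List.take as.length) h1
    rw [List.take_left', ← List.map_take, List.take_range, min_eq_left hlen] at this
    · exact this.symm
    · rfl
  generalize as.length = g at hlen has
  subst has
  rcases g with _ | g
  · simp at h2
  refine ⟨g + 1, by omega, hlen, ?_, h2⟩
  have hpos := hn (g + 1) (by omega) hlen
  obtain ⟨k, hk⟩ : ∃ k, n (g + 1) = k + 1 := ⟨n (g+1) - 1, by omega⟩
  rw [List.range_succ, List.map_append, List.flatten_append] at h2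
  simp only [List.map_cons, List.map_nil, List.flatten_cons, List.flatten_nil, List.append_nil,
    hk, List.replicate_succ', ← List.append_assoc] at h2
  simpa using (List.append_inj' h2 rfl).2

/-- `p` is the product of a proper nonempty initial segment `A ++ [m]` of the factors; each of
these is a prefix of `p`, the last one starts with the word `r a`, and it differs from the factor
that follows. -/
lemma exists_factor_cut {w p pbar r s : List α} {a b : α} (hab : a < b) (hpe : p = r ++ a :: s)
    (hpb : pbar = r ++ [b]) (hpr : IsInvLyndon (p ++ r)) (hbre : IsBRE p pbar w)
    {L : List (List α)} (hflat : L.flatten = w) (hlyn : ∀ l ∈ L, IsLyndonWith invLt l)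
    (hpw : L.Pairwise (fun x y => ¬ List.Lex invLt x y)) :
    ∃ (A B : List (List α)) (m f : List α), L = (A ++ [m]) ++ f :: B ∧ p = (A ++ [m]).flatten ∧
      (∀ x ∈ A ++ [m], x <+: p) ∧ r ++ [a] <+: m ∧ m ≠ f := by
  obtain ⟨hp, hp0, hpnw, ⟨v, hv, hpv⟩, -, hbi, -⟩ := hbre
  rw [hpb] at hbi hpv
  have hA : ∀ y : List α, y ≠ [] → y <:+ p → ¬ y <+: r := by
    intro y hy hys
    subst hpe
    exact not_prefix_of_suffix hab hpr hbi hy hys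
  have hra : ∀ y : List α, y ≠ [] → y <:+ p → y <+: p → r ++ [a] <+: y := by
    intro y hy hys hyp
    have := hA y hy hys
    subst hpe
    exact prefix_of_not_prefix hyp this
  -- pieces of factors inside `p` are prefixes of `p`
  have hpre : ∀ (A B : List (List α)) (y z t : List α), L = A ++ (y ++ z) :: B →
      p = A.flatten ++ y ++ t → y <+: p := by
    intro A B y z t hL hpA
    rcases A with _ | ⟨l, A⟩
    · exact ⟨t, by simpa using hpA.symm⟩
    · apply prefix_of_factor (l := l) (f := y ++ z) (t := t) hp
      · exact ⟨A.flatten ++ (y ++ t), by simp [hpA]⟩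
      · rw [hL, List.cons_append, List.pairwise_cons] at hpw
        exact hpw.1 _ (by simp)
      · exact List.prefix_append _ _
      · exact ⟨(l :: A).flatten, by simp [hpA]⟩
  have key : ∃ A B, L = A ++ B ∧ p = A.flatten ∧ v = B.flatten := by
    rcases List.flatten_eq_append_iff.1 (hflat.trans hv) with h | ⟨A, y, c, cs, B, h1, h2, h3⟩
    · exact h
    · by_cases hy : y = []
      · exact ⟨A, (c :: cs) :: B, by simpa [hy] using h1, by simpa [hy] using h2, by simpa using h3⟩
      · exfalso
        have hyp : y <+: p := hpre A B y (c :: cs) [] h1 (by simpa using h2)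
        have hys : y <:+ p := ⟨A.flatten, h2.symm⟩
        have hray := hra y hy hys hyp
        have hly : List.Lex invLt (y ++ c :: cs) (c :: cs) := by
          apply (hlyn (y ++ c :: cs) (by rw [h1]; simp)).2.2 _ (by simp) _ (List.suffix_append _ _)
          intro h
          exact hy (by simpa using congrArg List.length h)
        have hzr : r ++ [b] <+: c :: cs → False := by
          rintro ⟨z, hz⟩
          obtain ⟨y', hy'⟩ := hray
          refine not_lex_of_strongLt ?_ hly
          have h := strongLt_of_lt r z (y' ++ c :: cs) hab
          rwa [show r ++ b :: z = c :: cs by rw [← hz]; simp,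
            show r ++ a :: (y' ++ c :: cs) = y ++ c :: cs by rw [← hy']; simp] at h
        have hzv : c :: cs <+: v := ⟨B.flatten, h3.symm⟩
        rcases List.prefix_or_prefix_of_prefix hzv hpv with h | h
        · rcases List.prefix_concat_iff.1 h with h | h
          · exact hzr (by rw [h])
          · refine not_lex_of_prefix ?_ hly
            exact (h.trans (List.prefix_append r [a])).trans (hray.trans (List.prefix_append _ _))
        · exact hzr h
  obtain ⟨A, B, hL, hpA, hvB⟩ := key
  rcases B with _ | ⟨f, B⟩
  · exact absurd (by simp [hv, hvB]) hpnw
  rcases List.eq_nil_or_concat A with rfl | ⟨A, m, rfl⟩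
  · exact absurd (by simpa using hpA) hp0
  rw [List.concat_eq_append] at hL hpA
  have hall : ∀ x ∈ A ++ [m], x <+: p := by
    intro x hx
    obtain ⟨A1, A2, hA12⟩ := List.append_of_mem hx
    rw [hA12] at hL hpA
    exact hpre A1 (A2 ++ f :: B) x [] A2.flatten (by simpa using hL) (by simpa using hpA)
  have hm : r ++ [a] <+: m :=
    hra m (hlyn m (by rw [hL]; simp)).1 ⟨A.flatten, by simp [hpA]⟩ (hall m (by simp))
  refine ⟨A, B, m, f, hL, hpA, hall, hm, ?_⟩
  rintro rfl
  have h1 : r ++ [a] <+: v := hm.trans ⟨B.flatten, by simp [hvB]⟩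
  have h2 := (List.prefix_of_prefix_length_le h1 hpv (by simp)).eq_of_length (by simp)
  exact hab.ne (by simpa using h2)

end Aux

/-- Proposition `bordo1`: with `(p, p̄) ∈ Pref_bre(w)` and `ℓ₁^{n₁}, …, ℓ_q^{n_q}` the
first maximal nonincreasing chain for the prefix order in `CFL_in(w)`, one has
`p = ℓ₁^{n₁} ⋯ ℓ_g^{n_g}` for some `g ≤ q`, and writing `ℓ_g = u_g a_g v'_g` one has
`p̄ = u_g b` with `a_g < b` (here `ℓ`, `n` are indexed 1-based). -/
theorem stmt4 {α : Type*} [LinearOrder α] (w : List α) (hw : w ≠ [])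
    (hwn : ¬ IsInvLyndon w)
    (p pbar : List α) (hbre : IsBRE p pbar w)
    (h : ℕ) (hh : 0 < h) (ℓ : ℕ → List α) (n : ℕ → ℕ)
    (hn : ∀ j, 1 ≤ j → j ≤ h → 1 ≤ n j)
    (hdist : ∀ j1 j2, 1 ≤ j1 → j1 ≤ h → 1 ≤ j2 → j2 ≤ h → j1 ≠ j2 → ℓ j1 ≠ ℓ j2)
    (hCFL : IsCFLWith invLt w
      (((List.range h).map (fun j => List.replicate (n (j+1)) (ℓ (j+1)))).flatten))
    (q : ℕ) (hq1 : 1 ≤ q) (hqh : q ≤ h)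
    (hchain : ∀ j, 1 ≤ j → j < q → ℓ (j+1) <+: ℓ j)
    (hmax : q < h → ¬ ℓ (q+1) <+: ℓ q) :
    ∃ g, 1 ≤ g ∧ g ≤ q ∧
      p = (((List.range g).map (fun j => List.replicate (n (j+1)) (ℓ (j+1)))).flatten).flatten ∧
      ∃ (u v' : List α) (a b : α), ℓ g = u ++ a :: v' ∧ pbar = u ++ [b] ∧ a < b := by
  obtain ⟨-, hflat, hlyn, hch⟩ := hCFL
  have : Trans (fun x y : List α => ¬ List.Lex invLt x y) (fun x y => ¬ List.Lex invLt x y)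
      (fun x y => ¬ List.Lex invLt x y) := ⟨not_lex_trans⟩
  have hpw := List.isChain_iff_pairwise.1 hch
  obtain ⟨r, s, a, b, hab, hpe, hpb, hpr⟩ := hbre.exists_eq
  obtain ⟨A, B, m, f, hL, hpA, hall, hm, hmf⟩ :=
    exists_factor_cut hab hpe hpb hpr hbre hflat hlyn hpw
  obtain ⟨g, hg1, hgh, rfl, hg⟩ := exists_block_cut h ℓ n hn A B m f hmf hL
  rw [hg] at hpA hall
  refine ⟨g, hg1, ?_, hpA, ?_⟩
  · -- otherwise `ℓ_q` and `ℓ_{q+1}` are both prefixes of `p`, and `ℓ_{q+1}` is at most `ℓ_q`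
    by_contra hgq
    have hmem : ∀ j, 1 ≤ j → j ≤ g → ℓ j <+: p := by
      intro j hj1 hjg
      apply hall
      rw [List.mem_flatten]
      refine ⟨List.replicate (n j) (ℓ j), List.mem_map.2 ⟨j - 1, ?_, ?_⟩, ?_⟩
      · rw [List.mem_range]; omega
      · simp only [Nat.sub_add_cancel hj1]
      · have := hn j hj1 (by omega)
        simp; omega
    have h1 := hmem q hq1 (by omega)
    have h2 := hmem (q + 1) (by omega) (by omega)
    have hnp := hmax (by omega)
    have h3 : ℓ q <+: ℓ (q + 1) := (List.prefix_or_prefix_of_prefix h1 h2).resolve_right hnp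
    have h4 : List.Lex invLt (ℓ q) (ℓ (q + 1)) :=
      lex_of_prefix_of_ne h3 (fun h => hnp (by rw [h]))
    have h5 := (List.pairwise_flatten.1 hpw).2
    rw [List.pairwise_map] at h5
    have h6 := List.pairwise_iff_getElem.1 h5 (q - 1) q (by simp; omega) (by simp; omega) (by omega)
    simp only [List.getElem_range, Nat.sub_add_cancel hq1] at h6
    have hn1 := hn q hq1 hqh
    have hn2 := hn (q + 1) (by omega) (by omega)
    exact h6 _ (List.mem_replicate.2 ⟨by omega, rfl⟩) _ (List.mem_replicate.2 ⟨by omega, rfl⟩) h4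
  · obtain ⟨v', hv'⟩ := hm
    exact ⟨r, v', a, b, by rw [← hv']; simp, hpb, hab⟩
end

section
/- Let w be a nonempty word over a totally ordered alphabet Σ that is not an inverse Lyndon word, and let ICFL(w) = (m1, …, mk). For every i with 1 ≤ i ≤ k−1, if z is a nonempty border of m_i, then z is not a prefix of m_{i+1}. -/
/-!
Why the result holds. Let `(p, p̄)` be the pair of `Pref_bre(w)`, with `p = r a s`, `p̄ = r b`, `a < b`.

No nonempty `z` that is both a prefix and a suffix of `p` is a prefix of `p̄`
(`IsBRE.not_prefix_of_border`). Otherwise `z` is a prefix of `r`, say `r = z t`. Comparing two proper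
suffixes of the inverse Lyndon word `p r` with `p r` itself gives `r ≺ t a s r ≺ r a s r`, so `r` is
a prefix of `t a s r`, and hence `t a` is a prefix of `r`. Then the inverse Lyndon word `p̄` starts
with `t a` and has the proper suffix `t b`, which is impossible as `a < b`.

The theorem follows by induction on the construction of `ICFL(w)`, once the case `z = m_i` is
included, that is, once one also proves that `m_i` is not a prefix of `m_{i+1}`. When `p` is a factor
on its own, `p̄` is a prefix of the next factor and the previous paragraph applies. When `p` is
merged with `m'₁`, the word `m'₁` is a prefix of `p`; thus a word `z` as above which is not
longer than `m'₁` is a prefix and a suffix of `m'₁`, while a longer `z` has `m'₁` as a prefix, and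
both are excluded by the induction hypothesis.
-/

open List

section Words

variable {α : Type*} [LinearOrder α]

theorem lexLt_append_left_cancel (z : List α) {x y : List α}
    (h : lexLt (z ++ x) (z ++ y)) : lexLt x y := by
  induction z with
  | nil => exact h
  | cons c z ih =>
    cases h with
    | rel h => exact absurd h (lt_irrefl _)
    | cons h => exact ih h

theorem prefix_of_lexLt_of_lexLt (r : List α) {y x : List α}
    (h₁ : lexLt r y) (h₂ : lexLt y (r ++ x)) : r <+: y := by
  induction r generalizing y with
  | nil => exact ⟨_, rfl⟩
  | cons c r ih =>
    cases h₁ with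
    | rel h =>
      cases h₂ with
      | rel h' => exact absurd (h.trans h') (lt_irrefl _)
      | cons h' => exact absurd h (lt_irrefl _)
    | cons h =>
      cases h₂ with
      | rel h' => exact absurd h' (lt_irrefl _)
      | cons h' => exact (List.prefix_cons_inj c).2 (ih h h')

theorem exists_decomp_of_lexLt {p q : List α} (h : lexLt p q) (hp : ¬ p <+: q) :
    ∃ r a s b t, p = r ++ a :: s ∧ q = r ++ b :: t ∧ a < b := by
  unfold lexLt at h
  induction h with
  | nil => exact absurd ⟨_, rfl⟩ hp
  | @rel a s b t h => exact ⟨[], a, s, b, t, rfl, rfl, h⟩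
  | @cons c x y h ih =>
    obtain ⟨r, a, s, b, t, rfl, rfl, hab⟩ := ih fun h' => hp ((List.prefix_cons_inj c).2 h')
    exact ⟨c :: r, a, s, b, t, rfl, rfl, hab⟩

theorem lexLt_append_cons (r : List α) {a b : α} (s t : List α) (h : a < b) :
    lexLt (r ++ a :: s) (r ++ b :: t) := by
  induction r with
  | nil => exact List.Lex.rel h
  | cons c r ih => exact List.Lex.cons ih

/-- The shape `p = r a s`, `p̄ = r b` of a bounded right extension: nothing follows `b`, since
otherwise `p r b` would be inverse Lyndon although its suffix `r b` is larger than it. -/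
theorem IsBRE.exists_decomp {p q w : List α} (h : IsBRE p q w) :
    ∃ r a s b, p = r ++ a :: s ∧ q = r ++ [b] ∧ a < b := by
  obtain ⟨-, -, -, -, -, -, hext, -, hlt, hnp⟩ := h
  obtain ⟨r, a, s, b, t, hp, hq, hab⟩ := exists_decomp_of_lexLt hlt hnp
  refine ⟨r, a, s, b, hp, ?_, hab⟩
  by_contra hne
  have h1 : IsInvLyndon (p ++ (r ++ [b])) :=
    hext (r ++ [b]) (by simp) (Ne.symm hne) ⟨t, by simp [hq]⟩
  have h2 : lexLt (r ++ [b]) (p ++ (r ++ [b])) :=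
    h1.2 (r ++ [b]) (by simp)
      (fun h => by have := congrArg List.length h; simp [hp] at this) (List.suffix_append _ _)
  have h3 : lexLt (p ++ (r ++ [b])) (r ++ [b]) := by
    rw [hp, List.append_assoc, List.cons_append]
    exact lexLt_append_cons r _ _ hab
  exact lt_asymm (show r ++ [b] < p ++ (r ++ [b]) from h2) h3

/-- The word `p̄` is not a prefix of `p`. -/
theorem IsBRE.not_prefix_left {p q w : List α} (h : IsBRE p q w) : ¬ q <+: p := by
  obtain ⟨r, a, s, b, rfl, rfl, hab⟩ := h.exists_decomp
  intro hq
  rw [List.prefix_append_right_inj] at hq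
  simp only [List.cons_prefix_cons] at hq
  exact hab.ne hq.1.symm

/-- A nonempty `z` that is both a prefix and a suffix of `p` is not a prefix of `p̄`: otherwise `p̄`
would have a proper suffix larger than itself. -/
theorem IsBRE.not_prefix_of_border {p q w z : List α} (h : IsBRE p q w) (hz : z ≠ [])
    (hzp : z <+: p) (hzs : z <:+ p) : ¬ z <+: q := by
  intro hzq
  have hnp : ¬ p <+: q := h.2.2.2.2.2.2.2.2.2
  have hql : IsInvLyndon q := h.2.2.2.2.2.1
  have hext := h.2.2.2.2.2.2.1
  have hqp := h.not_prefix_left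
  obtain ⟨r, a, s, b, hp, hq, hab⟩ := h.exists_decomp
  have hzr : z <+: r := by
    rw [hq, List.prefix_concat_iff] at hzq
    rcases hzq with hzq | hzq
    · exact absurd (hq ▸ hzq ▸ hzp) hqp
    · exact hzq
  obtain ⟨t, ht⟩ := hzr
  have hr : r ≠ [] := by
    rintro rfl
    simp at ht
    exact hz ht.1
  have hzpos : 0 < z.length := List.length_pos_iff.2 hz
  have hzne : z.length ≠ p.length := fun he => by
    rw [hzp.eq_of_length he] at hzq
    exact hnp hzq
  have hpr : IsInvLyndon (p ++ r) := hext r hr (by simp [hq]) (by simp [hq])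
  have hpr' : p ++ r = z ++ (t ++ a :: (s ++ r)) := by
    rw [hp, ← ht]; simp
  -- The suffix `z r` of `p r` is smaller than `p r`; cancel the common prefix `z`.
  have h1 : lexLt r (t ++ a :: (s ++ r)) := by
    apply lexLt_append_left_cancel z
    rw [← hpr']
    refine hpr.2 (z ++ r) (by simp [hz]) (fun he => hzne ?_) ?_
    · simpa using congrArg List.length he
    · obtain ⟨u, hu⟩ := hzs
      exact ⟨u, by rw [← hu]; simp⟩
  have h2 : lexLt (t ++ a :: (s ++ r)) (r ++ a :: (s ++ r)) := by
    have : r ++ a :: (s ++ r) = p ++ r := by simp [hp]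
    rw [this]
    refine hpr.2 _ (by simp) (fun he => ?_) ⟨z, hpr'.symm⟩
    have := congrArg List.length (he.trans hpr')
    simp only [List.length_append, List.length_cons] at this
    omega
  have h3 : r <+: t ++ a :: (s ++ r) := prefix_of_lexLt_of_lexLt r h1 h2
  have h4 : t ++ [a] <+: r := by
    refine List.prefix_of_prefix_length_le ⟨s ++ r, by simp⟩ h3 ?_
    rw [← ht]; simp; omega
  obtain ⟨y, hy⟩ := h4
  -- The word `p̄` starts with `t a` and ends with `t b`.
  have h5 : lexLt (t ++ [b]) q := by
    refine hql.2 _ (by simp) (fun he => ?_) ⟨z, by rw [hq, ← ht]; simp⟩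
    have := congrArg List.length he
    rw [hq, ← ht] at this
    simp only [List.length_append, List.length_cons, List.length_nil] at this
    omega
  have h6 : lexLt q (t ++ [b]) := by
    rw [hq, ← hy, List.append_assoc, List.append_assoc]
    exact lexLt_append_cons t _ _ hab
  exact lt_asymm (show t ++ [b] < q from h5) h6

theorem IsICFL.ne_nil {w : List α} {M : List (List α)} (h : IsICFL w M) :
    ∀ m ∈ M, m ≠ [] := by
  induction h with
  | base w hw => simpa using hw.1
  | ext w p q v m1 ms _ hbre _ _ _ ih =>
    exact List.forall_mem_cons.2 ⟨hbre.2.1, ih⟩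
  | grp w p q v r a b s m1 ms _ hbre _ _ _ _ _ _ ih =>
    rw [List.forall_mem_cons] at ih ⊢
    exact ⟨by simp [hbre.2.1], ih.2⟩

/-- Compared with the borders of a factor, the factor itself is allowed as `z`; the induction
needs this in the step which merges `p` with the first factor of the rest. -/
theorem IsICFL.isChain {w : List α} {M : List (List α)} (h : IsICFL w M) :
    M.IsChain fun x y => ∀ z : List α, z ≠ [] → z <+: x → z <:+ x → ¬ z <+: y := by
  induction h with
  | base w hw => exact List.isChain_singleton _
  | ext w p q v m1 ms _ hbre _ _ hqm ih =>
    refine List.isChain_cons_cons.2 ⟨fun z hz hzp hzs hzm => ?_, ih⟩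
    rcases List.prefix_or_prefix_of_prefix hzm hqm with h | h
    · exact hbre.not_prefix_of_border hz hzp hzs h
    · exact hbre.not_prefix_left (h.trans hzp)
  | grp w p q v r a b s m1 ms _ hbre _ hp _ _ hv hmr ih =>
    have hm1 : m1 ≠ [] := hv.ne_nil m1 (by simp)
    cases ms with
    | nil => exact List.isChain_singleton _
    | cons m2 ms =>
      rw [List.isChain_cons_cons] at ih ⊢
      refine ⟨fun z hz hzp hzs hzm => ?_, ih.2⟩
      have hmp : m1 <+: p ++ m1 :=
        hmr.trans ⟨a :: s ++ m1, by rw [hp]; simp⟩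
      rcases le_total z.length m1.length with hl | hl
      · exact ih.1 z hz (List.prefix_of_prefix_length_le hzp hmp hl)
          (List.suffix_of_suffix_length_le hzs (List.suffix_append p m1) hl) hzm
      · exact ih.1 m1 hm1 (List.prefix_refl _) (List.suffix_refl _)
          ((List.prefix_of_prefix_length_le hmp hzp hl).trans hzm)

end Words

/-- Proposition `bordo4`: if `ICFL(w) = (m₁, …, m_k)` and `z` is a nonempty border of
`m_i`, then `z` is not a prefix of `m_{i+1}` (indices 0-based). -/
theorem stmt7 {α : Type*} [LinearOrder α] (w : List α) (hw : w ≠ [])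
    (hwn : ¬ IsInvLyndon w)
    (M : List (List α)) (hM : IsICFL w M) :
    ∀ i, i + 1 < M.length →
      ∀ z : List α, z ≠ [] → IsBorder z M[i]! → ¬ z <+: M[i+1]! := by
  intro i hi z hz hb
  have h := List.isChain_iff_getElem.1 hM.isChain i hi
  rw [getElem!_pos M i (by omega)] at hb
  rw [getElem!_pos M (i + 1) hi]
  exact h z hz hb.1 hb.2.2
end

section
/- Let w be a nonempty word over a totally ordered alphabet Σ that is not an inverse Lyndon word, and let ICFL(w) = (m1, …, mk). Let i, h, j be integers with 1 ≤ i < h < j ≤ k, and suppose m_i = r s and m_j = r t for words r, s, t. Then r is a prefix of m_h. -/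
/-!
The factors of an ICFL increase strictly for `≪`, hence for `≺`, and the words having a given
prefix `r` form an interval of the lexicographic order: a factor lying between two factors that
start with `r` starts with `r` too.

That the factors increase for `≪` (`IsICFL.isChain_lexLtLt`) follows by induction on the
factorization, because `x ≪ y` survives appending arbitrary words to `x` and to `y`
(`lexLtLt.append`). In the first recursive case `p ≪ pbar` and `m1` extends `pbar`; in the second
one `m1 ≪ m2` and `p ++ m1` extends `m1`, since `m1` is a prefix of `r`, which is a prefix of `p`.
-/

open List

/-- If `x ≪ y`, the comparison is decided at a letter of both words, so it is unaffected by what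
follows them. -/
theorem lexLtLt.append {α : Type*} [LinearOrder α] {x y : List α} (hxy : lexLtLt x y)
    (u v : List α) : lexLtLt (x ++ u) (y ++ v) := by
  obtain ⟨hlt, hpre⟩ := hxy
  unfold lexLt at hlt
  induction hlt with
  | nil => exact absurd (List.nil_prefix) hpre
  | cons _ ih =>
    have h := ih (fun h => hpre (by simpa using h))
    exact ⟨List.Lex.cons h.1, fun h' => h.2 (by simpa using h')⟩
  | rel hab =>
    exact ⟨List.Lex.rel hab, fun h' => hab.ne (by simpa using (List.cons_prefix_cons.1 h').1)⟩

/-- The words with prefix `r` are order-convex for `≺`. -/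
theorem prefix_of_lexLt_of_lexLt_s11 {α : Type*} [LinearOrder α] {r x y z : List α}
    (hxy : lexLt x y) (hyz : lexLt y z) (hx : r <+: x) (hz : r <+: z) : r <+: y := by
  induction r generalizing x y z with
  | nil => exact List.nil_prefix
  | cons c r ih =>
    obtain ⟨x', rfl⟩ := hx
    obtain ⟨z', rfl⟩ := hz
    unfold lexLt at hxy hyz
    cases hxy with
    | cons h1 =>
      cases hyz with
      | cons h2 =>
        exact List.cons_prefix_cons.2
          ⟨rfl, ih h1 h2 (List.prefix_append _ _) (List.prefix_append _ _)⟩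
      | rel h2 => exact absurd h2 (lt_irrefl _)
    | rel h1 =>
      cases hyz with
      | cons h2 => exact absurd h1 (lt_irrefl _)
      | rel h2 => exact absurd h1 h2.asymm

/-- Consecutive factors of an ICFL increase for `≪`. The stronger relation is needed for the
induction: `m1 ≺ m2` alone would not give `p ++ m1 ≺ m2`. -/
theorem IsICFL.isChain_lexLtLt {α : Type*} [LinearOrder α] {w : List α} {M : List (List α)}
    (hM : IsICFL w M) : M.IsChain lexLtLt := by
  induction hM with
  | base w _ => exact List.isChain_singleton _
  | ext w p pbar v m1 ms _ hbre _ _ hpre ih =>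
    obtain ⟨u, rfl⟩ := hpre
    obtain ⟨-, -, -, -, -, -, -, -, hlt, hnp⟩ := hbre
    refine List.isChain_cons_cons.2 ⟨?_, ih⟩
    simpa using lexLtLt.append ⟨hlt, hnp⟩ [] u
  | grp w p pbar v r a b s m1 ms _ _ _ hp _ _ _ hpre ih =>
    obtain ⟨u, rfl⟩ := hpre
    cases ms with
    | nil => exact List.isChain_singleton _
    | cons m2 ms =>
      obtain ⟨h12, hms⟩ := List.isChain_cons_cons.1 ih
      refine List.isChain_cons_cons.2 ⟨?_, hms⟩
      subst hp
      simpa using h12.append (u ++ a :: s ++ m1) []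

/-- Corollary `corollariopreliminary-zero`: with `ICFL(w) = (m₁, …, m_k)` and
`i < h < j` (0-based), if `m_i = r s` and `m_j = r t` then `r` is a prefix of `m_h`. -/
theorem stmt11 {α : Type*} [LinearOrder α] (w : List α) (hw : w ≠ [])
    (hwn : ¬ IsInvLyndon w)
    (M : List (List α)) (hM : IsICFL w M)
    (i h j : ℕ) (hih : i < h) (hhj : h < j) (hjk : j < M.length)
    (r s t : List α)
    (hmi : M[i]! = r ++ s) (hmj : M[j]! = r ++ t) :
    r <+: M[h]! := by
  have hpw : M.Pairwise (· < ·) :=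
    (hM.isChain_lexLtLt.imp fun _ _ hxy => hxy.1).pairwise
  have hlt : ∀ a b : ℕ, a < b → b < M.length → lexLt M[a]! M[b]! := by
    intro a b hab hb
    rw [getElem!_pos M a (hab.trans hb), getElem!_pos M b hb]
    exact List.pairwise_iff_getElem.1 hpw a b _ _ hab
  exact prefix_of_lexLt_of_lexLt_s11 (hlt i h hih (hhj.trans hjk)) (hlt h j hhj hjk)
    (hmi ▸ List.prefix_append r s) (hmj ▸ List.prefix_append r t)
end

section
/- Let w be a nonempty word over a totally ordered alphabet Σ that is not an inverse Lyndon word, and let ICFL(w) = (m1, …, mk). Let i be an integer with 1 < i ≤ k, and suppose that for each h with 1 ≤ h ≤ i−1 there are words r_h, s_h, t_h and letters a_h < b_h such that m_h = r_h a_h s_h and m_i = r_h b_h t_h. Then for each h with 1 ≤ h ≤ i−1, the word r_{i−1} b_{i−1} is not a factor of m_h. -/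
/-!
The factors of `ICFL(w)` are inverse Lyndon words `m₁ ≪ m₂ ≪ ⋯ ≪ m_k`
(`IsICFL.isInvLyndon_and_isChain`), hence strictly increasing for `≺`. Write
`m_{i-1} = r a s` and `m_i = r b t` with `a < b`. If `r b` occurred in `m_h` with `h < i`, the
suffix `x` of `m_h` starting at that occurrence would satisfy `m_{i-1} ≺ x`, since `x` starts with
`r b`, and `x ≼ m_h`, since `m_h` is an inverse Lyndon word. Thus `m_{i-1} ≺ m_h`, against
`m_h ≼ m_{i-1}`.
-/

open List

section Helpers

variable {α : Type*} [LinearOrder α]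

/-- `x ≪ y`, expressed by explicit decompositions `x = r a s` and `y = r b t` with `a < b`. -/
def Diverges (x y : List α) : Prop :=
  ∃ (r s t : List α) (a b : α), x = r ++ a :: s ∧ y = r ++ b :: t ∧ a < b

theorem diverges_of_lex {x y : List α} (h : lexLt x y) (hp : ¬ x <+: y) : Diverges x y := by
  unfold lexLt at h
  induction h with
  | nil => exact absurd (List.nil_prefix) hp
  | cons h ih =>
    obtain ⟨r, s, t, a, b, rfl, rfl, hab⟩ := ih (fun h' => hp (by simpa using h'))
    exact ⟨_ :: r, s, t, a, b, rfl, rfl, hab⟩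
  | rel h => exact ⟨[], _, _, _, _, rfl, rfl, h⟩

theorem lex_append_cons (r s t : List α) {a b : α} (hab : a < b) :
    lexLt (r ++ a :: s) (r ++ b :: t) := by
  unfold lexLt
  induction r with
  | nil => exact List.Lex.rel hab
  | cons c r ih => exact List.Lex.cons ih

theorem Diverges.lt {x y : List α} (h : Diverges x y) : x < y := by
  obtain ⟨r, s, t, a, b, rfl, rfl, hab⟩ := h
  exact lex_append_cons r s t hab

/-- Neither word being a prefix of the other, extending them to the right keeps their order. -/
theorem Diverges.mono {x y x' y' : List α} (h : Diverges x y) (hx : x <+: x') (hy : y <+: y') :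
    Diverges x' y' := by
  obtain ⟨r, s, t, a, b, rfl, rfl, hab⟩ := h
  obtain ⟨u, rfl⟩ := hx
  obtain ⟨v, rfl⟩ := hy
  exact ⟨r, s ++ u, t ++ v, a, b, by simp, by simp, hab⟩

theorem IsInvLyndon.le_of_suffix {w x : List α} (hw : IsInvLyndon w) (hx : x ≠ [])
    (hs : x <:+ w) : x ≤ w := by
  by_cases h : x = w
  · exact h.le
  · exact le_of_lt (hw.2 x hx h hs : x < w)

theorem IsICFL.isInvLyndon_and_isChain {w : List α} {M : List (List α)} (h : IsICFL w M) :
    (∀ m ∈ M, IsInvLyndon m) ∧ M.IsChain Diverges := by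
  induction h with
  | base w hw => simpa using hw
  | ext w p pbar v m1 ms _ hbre _ _ hpre ih =>
    obtain ⟨hp, -, -, -, -, -, -, -, hlt, hnp⟩ := hbre
    refine ⟨?_, ?_⟩
    · intro m hm
      rcases List.mem_cons.1 hm with rfl | hm
      · exact hp
      · exact ih.1 m hm
    · exact List.IsChain.cons_cons
        ((diverges_of_lex hlt hnp).mono (List.prefix_refl _) hpre) ih.2
  | grp w p pbar v r a b s m1 ms _ hbre _ hp hpb _ _ hm1 ih =>
    obtain ⟨-, -, -, -, -, -, hext, -⟩ := hbre
    have hm1r : m1.length ≤ r.length := hm1.length_le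
    refine ⟨?_, ?_⟩
    · intro m hm
      rcases List.mem_cons.1 hm with rfl | hm
      -- `m1` is a nonempty proper prefix of `pbar = r b`, so minimality of `pbar` applies to it.
      · refine hext m1 (ih.1 m1 (by simp)).1 ?_ (hpb ▸ hm1.trans (List.prefix_append _ _))
        rintro rfl
        rw [hpb] at hm1r
        simp at hm1r
      · exact ih.1 m (List.mem_cons_of_mem _ hm)
    · cases ms with
      | nil => simp
      | cons m2 ms =>
        have hc := ih.2
        rw [List.isChain_cons_cons] at hc ⊢
        -- `p m1` itself starts with `m1`, so it inherits `m1 ≪ m2`.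
        have hpre : m1 <+: p ++ m1 := by
          rw [hp, List.append_assoc]
          exact hm1.trans (List.prefix_append _ _)
        exact ⟨hc.1.mono hpre (List.prefix_refl _), hc.2⟩

theorem IsICFL.pairwise_lt {w : List α} {M : List (List α)} (h : IsICFL w M) :
    M.Pairwise (· < ·) :=
  List.isChain_iff_pairwise.1 (h.isInvLyndon_and_isChain.2.imp fun _ _ => Diverges.lt)

end Helpers

/-- Lemma `Lemma1`: with `ICFL(w) = (m₁, …, m_k)`, `m_h = r_h a_h s_h`,
`m_i = r_h b_h t_h`, `a_h < b_h` for each `h < i` (0-based), the word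
`r_{i-1} b_{i-1}` is not a factor of any `m_h`, `h < i`. -/
theorem stmt12 {α : Type*} [LinearOrder α] (w : List α) (hw : w ≠ [])
    (hwn : ¬ IsInvLyndon w)
    (M : List (List α)) (hM : IsICFL w M)
    (i : ℕ) (hi0 : 0 < i) (hik : i < M.length)
    (r s t : ℕ → List α) (a b : ℕ → α)
    (hdec : ∀ h, h < i →
      M[h]! = r h ++ a h :: s h ∧ M[i]! = r h ++ b h :: t h ∧ a h < b h) :
    ∀ h, h < i → ¬ (r (i-1) ++ [b (i-1)]) <:+: M[h]! := by
  rintro h hh ⟨u, v, huv⟩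
  have hhM : h < M.length := hh.trans hik
  have hiM : i - 1 < M.length := by omega
  obtain ⟨hm, -, hab⟩ := hdec (i - 1) (by omega)
  rw [getElem!_pos M h hhM] at huv
  rw [getElem!_pos M (i - 1) hiM] at hm
  have hle : M[h] ≤ M[i - 1] := by
    rcases eq_or_lt_of_le (show h ≤ i - 1 by omega) with rfl | hlt
    · exact le_rfl
    · exact (List.pairwise_iff_getElem.1 hM.pairwise_lt h (i - 1) hhM hiM hlt).le
  have hsuf : r (i - 1) ++ b (i - 1) :: v ≤ M[h] :=
    (hM.isInvLyndon_and_isChain.1 _ (List.getElem_mem hhM)).le_of_suffix (by simp)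
      ⟨u, by rw [← huv]; simp⟩
  have hlt : M[i - 1] < r (i - 1) ++ b (i - 1) :: v := by
    rw [hm]
    exact lex_append_cons _ _ _ hab
  exact absurd (hlt.trans_le (hsuf.trans hle)) (lt_irrefl _)
end
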